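/- arXiv:math/0604490 — 4 statements merged into one kernel-verified Lean document; each statement's English description precedes it below -/
import Mathlib

section
/- Let Λ be a nonempty finite type and let E be a finite-dimensional real normed vector space. For a setoid γ on Λ let Δ_γ = { x : Λ → E | for all a, b, if a ∼_γ b then x(a) = x(b) } ⊆ (Λ → E), a linear subspace containing 0. Then there exists a constant C > 0 such that for all setoids μ, ν on Λ and every x : Λ → E, the distance from x to Δ_{μ ⊔ ν} satisfies dist(x, Δ_{μ⊔ν}) ≤ C · ( dist(x, Δ_μ) + dist(x, Δ_ν) ), where dist(x, S) denotes the infimum distance from x to the set S in the product (supremum) norm on Λ → E. In particular, if ε(μ⊔ν) ≥ C·(ε(μ)+ε(ν)), the ε(μ)-neighborhood of Δ_μ intersected with the ε(ν)-neighborhood of Δ_ν is contained in the ε(μ⊔ν)-neighborhood of Δ_{μ⊔ν}. -/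
/-!
Points related by `μ ⊔ ν` are joined by a chain of distinct points of `Λ` whose consecutive
members are related by `μ` or by `ν`; such a chain has fewer than `card Λ` steps
(`dist_le_card_mul_of_sup_rel`). If `a` and `b` are related by `γ`, then `x a` and `x b` are at
distance at most twice that from `x` to `Δ_γ` (`dist_le_two_mul_infDist`). Hence `x` oscillates by
at most `2 * card Λ * (dist(x, Δ_μ) + dist(x, Δ_ν))` on each class of `μ ⊔ ν`, and replacing `x` on
each class by its value at a representative yields a point of `Δ_{μ ⊔ ν}` within that distance
of `x`. So `C = 2 * card Λ` works.
-/

/-- The strict `γ`-diagonal in `Λ → E` for a setoid `γ` on `Λ`. -/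
def strictDiagonal {Λ E : Type*} (γ : Setoid Λ) : Set (Λ → E) :=
  {x | ∀ a b : Λ, γ.r a b → x a = x b}

lemma strictDiagonal_nonempty {Λ E : Type*} [Zero E] (γ : Setoid Λ) :
    (strictDiagonal γ : Set (Λ → E)).Nonempty :=
  ⟨0, fun _ _ _ => rfl⟩

lemma dist_le_two_mul_infDist {Λ : Type*} [Fintype Λ] {E : Type*} [NormedAddCommGroup E]
    (γ : Setoid Λ) (x : Λ → E) {a b : Λ} (h : γ a b) :
    dist (x a) (x b) ≤ 2 * Metric.infDist x (strictDiagonal γ : Set (Λ → E)) := by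
  have key : dist (x a) (x b) / 2 ≤ Metric.infDist x (strictDiagonal γ : Set (Λ → E)) := by
    refine (Metric.le_infDist (strictDiagonal_nonempty γ)).2 fun y hy => ?_
    have hab : y a = y b := hy a b h
    have ha : dist (x a) (y a) ≤ dist x y := dist_le_pi_dist x y a
    have hb : dist (x b) (y b) ≤ dist x y := dist_le_pi_dist x y b
    have htri := dist_triangle_right (x a) (x b) (y a)
    rw [← hab] at hb
    linarith
  linarith

/-- A bound `D` on the jumps of `x` along `μ` and along `ν` bounds its jumps along `μ ⊔ ν`, at the
cost of a factor `card Λ`, since a path in the graph with edges `μ ∪ ν` has fewer than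
`card Λ` edges. -/
lemma dist_le_card_mul_of_sup_rel {Λ : Type*} [Fintype Λ] {E : Type*} [PseudoMetricSpace E]
    (μ ν : Setoid Λ) (x : Λ → E) {D : ℝ} (hD : 0 ≤ D)
    (hμ : ∀ a b, μ a b → dist (x a) (x b) ≤ D) (hν : ∀ a b, ν a b → dist (x a) (x b) ≤ D)
    {a b : Λ} (h : (μ ⊔ ν) a b) :
    dist (x a) (x b) ≤ Fintype.card Λ * D := by
  classical
  let G : SimpleGraph Λ := SimpleGraph.fromRel fun a b => μ a b ∨ ν a b
  have reachable_of_rel : ∀ c d, (μ c d ∨ ν c d) → G.Reachable c d := by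
    intro c d hcd
    by_cases hne : c = d
    · subst hne; exact SimpleGraph.Reachable.refl _
    · exact SimpleGraph.Adj.reachable ((SimpleGraph.fromRel_adj _ _ _).2 ⟨hne, Or.inl hcd⟩)
  have hle : μ ⊔ ν ≤ G.reachableSetoid :=
    sup_le (fun c d hcd => reachable_of_rel c d (Or.inl hcd))
      (fun c d hcd => reachable_of_rel c d (Or.inr hcd))
  have hwalk : ∀ {c d : Λ} (p : G.Walk c d), dist (x c) (x d) ≤ p.length * D := by
    intro c d p
    induction p with
    | nil => simp
    | @cons u v w huv p ih =>
      have huv' : dist (x u) (x v) ≤ D := by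
        rcases ((SimpleGraph.fromRel_adj _ _ _).1 huv).2 with (h | h) | (h | h)
        · exact hμ _ _ h
        · exact hν _ _ h
        · rw [dist_comm]; exact hμ _ _ h
        · rw [dist_comm]; exact hν _ _ h
      have htri := dist_triangle (x u) (x v) (x w)
      rw [SimpleGraph.Walk.length_cons]
      push_cast
      linarith
  obtain ⟨p⟩ : G.Reachable a b := hle h
  have hlen : (p.toPath : G.Walk a b).length ≤ Fintype.card Λ := p.toPath.2.length_lt.le
  calc dist (x a) (x b) ≤ (p.toPath : G.Walk a b).length * D := hwalk _
    _ ≤ Fintype.card Λ * D := by gcongr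

lemma infDist_strictDiagonal_le {Λ : Type*} [Fintype Λ] {E : Type*} [NormedAddCommGroup E]
    (γ : Setoid Λ) (x : Λ → E) {r : ℝ} (hr : 0 ≤ r)
    (h : ∀ a b, γ a b → dist (x a) (x b) ≤ r) :
    Metric.infDist x (strictDiagonal γ : Set (Λ → E)) ≤ r := by
  -- The comparison point takes on each class the value of `x` at a representative.
  let y : Λ → E := fun a => x (Quotient.mk γ a).out
  have hy : y ∈ (strictDiagonal γ : Set (Λ → E)) := fun a b hab =>
    congrArg (fun q : Quotient γ => x q.out) (Quotient.sound hab)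
  refine (Metric.infDist_le_dist_of_mem hy).trans ((dist_pi_le_iff hr).2 fun a => ?_)
  exact h _ _ (γ.symm' (Quotient.mk_out a))

/-- Let `Λ` be a nonempty finite type and `E` a finite-dimensional real normed vector space.
Then there is a constant `C > 0` such that for all setoids `μ, ν` on `Λ` and every
`x : Λ → E`, the distance from `x` to the strict `(μ ⊔ ν)`-diagonal is at most
`C * (dist(x, Δ_μ) + dist(x, Δ_ν))`; in particular, whenever
`C * (εμ + εν) ≤ εj`, the `εμ`-neighborhood of `Δ_μ` intersected with the
`εν`-neighborhood of `Δ_ν` is contained in the `εj`-neighborhood of `Δ_{μ ⊔ ν}`. -/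
theorem exists_const_infDist_join_le {Λ : Type*} [Fintype Λ] [Nonempty Λ]
    {E : Type*} [NormedAddCommGroup E] [NormedSpace ℝ E] [FiniteDimensional ℝ E] :
    ∃ C : ℝ, 0 < C ∧ ∀ μ ν : Setoid Λ,
      (∀ x : Λ → E,
        Metric.infDist x (strictDiagonal (μ ⊔ ν) : Set (Λ → E)) ≤
          C * (Metric.infDist x (strictDiagonal μ : Set (Λ → E)) +
            Metric.infDist x (strictDiagonal ν : Set (Λ → E)))) ∧
      (∀ εμ εν εj : ℝ, C * (εμ + εν) ≤ εj →
        Metric.thickening εμ (strictDiagonal μ : Set (Λ → E)) ∩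
            Metric.thickening εν (strictDiagonal ν : Set (Λ → E)) ⊆
          Metric.thickening εj (strictDiagonal (μ ⊔ ν) : Set (Λ → E))) := by
  have infDist_le : ∀ (μ ν : Setoid Λ) (x : Λ → E),
      Metric.infDist x (strictDiagonal (μ ⊔ ν) : Set (Λ → E)) ≤
        2 * Fintype.card Λ * (Metric.infDist x (strictDiagonal μ : Set (Λ → E)) +
          Metric.infDist x (strictDiagonal ν : Set (Λ → E))) := by
    intro μ ν x
    have hμ0 : 0 ≤ Metric.infDist x (strictDiagonal μ : Set (Λ → E)) := Metric.infDist_nonneg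
    have hν0 : 0 ≤ Metric.infDist x (strictDiagonal ν : Set (Λ → E)) := Metric.infDist_nonneg
    refine infDist_strictDiagonal_le _ x (by positivity) fun a b hab => ?_
    have hchain := dist_le_card_mul_of_sup_rel μ ν x
      (D := 2 * (Metric.infDist x (strictDiagonal μ : Set (Λ → E)) +
        Metric.infDist x (strictDiagonal ν : Set (Λ → E)))) (by positivity)
      (fun c d hcd => (dist_le_two_mul_infDist μ x hcd).trans (by linarith))
      (fun c d hcd => (dist_le_two_mul_infDist ν x hcd).trans (by linarith)) hab
    linarith
  have hC : (0 : ℝ) < 2 * Fintype.card Λ := by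
    have := Fintype.card_pos (α := Λ)
    positivity
  refine ⟨2 * Fintype.card Λ, hC, fun μ ν => ⟨infDist_le μ ν, ?_⟩⟩
  rintro εμ εν εj hε x ⟨hxμ, hxν⟩
  rw [Metric.mem_thickening_iff_infDist_lt (strictDiagonal_nonempty _)] at hxμ hxν ⊢
  exact (infDist_le μ ν x).trans_lt
    ((mul_lt_mul_of_pos_left (add_lt_add hxμ hxν) hC).trans_le hε)
end

section
/- (Intersection Lemma, abstract form of Lemma 5.4.) Let L be a lattice, X a type, and N : L → Set X a family of subsets satisfying N(μ) ∩ N(ν) ⊆ N(μ ⊔ ν) for all μ, ν ∈ L. For α ∈ L and β ≤ α define Q^α_β = N(β) \ ⋃ { N(γ) | β < γ and γ ≤ α }. Then for any β₁, β₂ ≤ α: if N(β₁) ∩ Q^α_{β₂} is nonempty, then β₁ ≤ β₂. -/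
/-- (Intersection Lemma, abstract form of Lemma 5.4.)  Let `L` be a lattice, `X` a type and
`N : L → Set X` a family of subsets with `N μ ∩ N ν ⊆ N (μ ⊔ ν)` for all `μ, ν`.  For
`β ≤ α` set `Q^α_β = N β \ ⋃ {N γ | β < γ ≤ α}`.  If `β₁, β₂ ≤ α` and
`N β₁ ∩ Q^α_{β₂}` is nonempty, then `β₁ ≤ β₂`. -/
theorem le_of_inter_Q_nonempty {L X : Type*} [Lattice L] (N : L → Set X)
    (hN : ∀ μ ν : L, N μ ∩ N ν ⊆ N (μ ⊔ ν))
    (α β₁ β₂ : L) (h₁ : β₁ ≤ α) (h₂ : β₂ ≤ α)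
    (hne : (N β₁ ∩ (N β₂ \ ⋃ γ ∈ {γ : L | β₂ < γ ∧ γ ≤ α}, N γ)).Nonempty) :
    β₁ ≤ β₂ := by
  obtain ⟨x, hx₁, hx₂, hx⟩ := hne
  by_contra h
  -- If `β₁ ≰ β₂`, the join `β₁ ⊔ β₂` is one of the `γ` whose `N γ` is removed, yet `x ∈ N (β₁ ⊔ β₂)`.
  exact hx (Set.mem_biUnion (show β₁ ⊔ β₂ ∈ {γ : L | β₂ < γ ∧ γ ≤ α} from
    ⟨right_lt_sup.mpr h, sup_le h₁ h₂⟩) (hN β₁ β₂ ⟨hx₁, hx₂⟩))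
end

section
/- (Partition corollary of the Intersection Lemma.) Let L be a finite lattice, X a type, and N : L → Set X a family of subsets satisfying N(μ) ∩ N(ν) ⊆ N(μ ⊔ ν) for all μ, ν ∈ L. For α ∈ L and β ≤ α define Q^α_β = N(β) \ ⋃ { N(γ) | β < γ and γ ≤ α }. Then: (i) for any β₁ ≠ β₂ with β₁, β₂ ≤ α, the sets Q^α_{β₁} and Q^α_{β₂} are disjoint; and (ii) ⋃_{β ≤ α} Q^α_β = ⋃_{β ≤ α} N(β). Hence { Q^α_β | β ≤ α } is a partition (disjoint decomposition) of ⋃_{β ≤ α} N(β). -/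
/-! For disjointness, a point common to `Q^α_{β₁}` and `Q^α_{β₂}` lies in `N (β₁ ⊔ β₂)`, and
`β₁ ⊔ β₂ ≤ α`, which forces `β₁ = β₁ ⊔ β₂ = β₂`. For the union, a point `x` of some `N β` with
`β ≤ α` lies in `Q^α_β` for any maximal such `β`. -/

/-- (Partition corollary of the Intersection Lemma.)  Let `L` be a finite lattice, `X` a
type and `N : L → Set X` with `N μ ∩ N ν ⊆ N (μ ⊔ ν)`.  For `β ≤ α` set
`Q^α_β = N β \ ⋃ {N γ | β < γ ≤ α}`.  Then (i) the sets `Q^α_{β₁}` and `Q^α_{β₂}` are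
disjoint for distinct `β₁, β₂ ≤ α`, and (ii) `⋃_{β ≤ α} Q^α_β = ⋃_{β ≤ α} N β`; i.e. the
`Q^α_β` form a disjoint decomposition of `⋃_{β ≤ α} N β`. -/
theorem Q_pairwise_disjoint_and_iUnion_eq {L X : Type*} [Lattice L] [Fintype L]
    (N : L → Set X) (hN : ∀ μ ν : L, N μ ∩ N ν ⊆ N (μ ⊔ ν)) (α : L) :
    (∀ β₁ β₂ : L, β₁ ≤ α → β₂ ≤ α → β₁ ≠ β₂ →
      Disjoint (N β₁ \ ⋃ γ ∈ {γ : L | β₁ < γ ∧ γ ≤ α}, N γ)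
        (N β₂ \ ⋃ γ ∈ {γ : L | β₂ < γ ∧ γ ≤ α}, N γ)) ∧
    (⋃ β ∈ {β : L | β ≤ α}, (N β \ ⋃ γ ∈ {γ : L | β < γ ∧ γ ≤ α}, N γ)) =
      ⋃ β ∈ {β : L | β ≤ α}, N β := by
  constructor
  · intro β₁ β₂ h₁ h₂ hne
    rw [Set.disjoint_left]
    rintro x ⟨hx₁, hm₁⟩ ⟨hx₂, hm₂⟩
    simp only [Set.mem_ofPred_eq, Set.mem_iUnion, not_exists] at hm₁ hm₂
    have hx : x ∈ N (β₁ ⊔ β₂) := hN β₁ β₂ ⟨hx₁, hx₂⟩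
    have hle : β₁ ⊔ β₂ ≤ α := sup_le h₁ h₂
    -- Neither index can lie strictly below the join, so both are equal to it.
    have e₁ : β₁ = β₁ ⊔ β₂ := by
      by_contra h
      exact hm₁ _ ⟨lt_of_le_of_ne le_sup_left h, hle⟩ hx
    have e₂ : β₂ = β₁ ⊔ β₂ := by
      by_contra h
      exact hm₂ _ ⟨lt_of_le_of_ne le_sup_right h, hle⟩ hx
    exact hne (e₁.trans e₂.symm)
  · apply Set.Subset.antisymm
    · exact Set.iUnion₂_mono fun β _ => Set.sdiff_subset
    · intro x hx
      simp only [Set.mem_ofPred_eq, Set.mem_iUnion, exists_prop] at hx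
      -- A maximal index `β ≤ α` with `x ∈ N β` exists because `L` is finite.
      obtain ⟨β, hβ⟩ := (Set.toFinite {β : L | β ≤ α ∧ x ∈ N β}).exists_maximal hx
      simp only [Set.mem_ofPred_eq, Set.mem_iUnion, exists_prop]
      refine ⟨β, hβ.prop.1, hβ.prop.2, ?_⟩
      simp only [Set.mem_iUnion, exists_prop, not_exists]
      rintro γ ⟨⟨hlt, hγ⟩, hxγ⟩
      exact hβ.not_gt ⟨hγ, hxγ⟩ hlt
end

section
/- (Multiplicity identity, equation (4.41).) Let Λ be a finite type, ι a finite index type, and α : ι → Finset Λ an ordered partition of Λ: the sets α(i) are pairwise disjoint and their union is all of Λ. Let Y be any type and x : Λ → Y. For y : Λ → Y define the α-multiplicity m_α(y) = card { σ : Equiv.Perm Λ | (∀ i, ∀ a ∈ α(i), σ(a) ∈ α(i)) and y ∘ σ = y }, and say y lies in the symmetrization fiber of x if for every i the multiset { y(a) | a ∈ α(i) } equals the multiset { x(a) | a ∈ α(i) }. Then the symmetrization fiber F of x is a finite set and Σ_{y ∈ F} m_α(y) = Π_i (card α(i))! . -/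
/-!
Let `G` be the group of permutations preserving every block. If `f : Λ → ι` sends a point to its
block, then `G = {σ | f ∘ σ = f}`, whose order is `∏ i, |α i|!`. The fiber of `x` is the
orbit `{x ∘ τ | τ ∈ G}` (`mem_symFiber_iff`), and for `y` in it the stabilizer of `y` in `G` has
as many elements as the transporter `{σ ∈ G | x ∘ σ = y}`, by translation with `τ`
(`alphaMult_eq_card_transporter`). Summing over `y` therefore counts each `σ ∈ G` once, at
`y = x ∘ σ`.
-/

/-- The `α`-multiplicity of a tuple `y : Λ → Y`: the number of permutations `σ` of `Λ`
leaving every block `α i` invariant and fixing `y` (i.e. `y ∘ σ = y`). -/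
noncomputable def alphaMult {Λ ι Y : Type*} (α : ι → Finset Λ) (y : Λ → Y) : ℕ :=
  Nat.card {σ : Equiv.Perm Λ // (∀ i, ∀ a ∈ α i, σ a ∈ α i) ∧ y ∘ σ = y}

/-- The fiber through `x` of the symmetrization map `S_α : Y^Λ → Y^{(α)}`: tuples `y`
which, on each block `α i`, take the same values as `x` counted with multiplicity. -/
def symFiber {Λ ι Y : Type*} (α : ι → Finset Λ) (x : Λ → Y) : Set (Λ → Y) :=
  {y | ∀ i, Multiset.map y (α i).val = Multiset.map x (α i).val}

/-- Tuples with the same blockwise multisets as `x` are exactly the rearrangements of `x` by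
block-preserving permutations; the blocks are the level sets of `f`. -/
theorem mem_symFiber_iff {Λ ι Y : Type*} [Finite Λ] (α : ι → Finset Λ) (f : Λ → ι)
    (hf : ∀ i a, a ∈ α i ↔ f a = i) (x y : Λ → Y) :
    y ∈ symFiber α x ↔ ∃ τ : Equiv.Perm Λ, f ∘ τ = f ∧ x ∘ τ = y := by
  classical
  constructor
  · intro hy
    have hcount : ∀ (w : Λ → Y) (i : ι) (z : Y),
        Nat.card {a // (f a, w a) = (i, z)} = Multiset.count z (Multiset.map w (α i).val) := by
      intro w i z
      rw [Multiset.count_map, ← Finset.filter_val, Finset.card_val]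
      refine Nat.subtype_card _ fun a => ?_
      simp [hf, eq_comm]
    have e : ∀ c : ι × Y, Nonempty ({a // (f a, y a) = c} ≃ {a // (f a, x a) = c}) := by
      rintro ⟨i, z⟩
      exact Finite.card_eq.mp (by rw [hcount, hcount, hy i])
    let τ : Equiv.Perm Λ := Equiv.ofFiberEquiv fun c => (e c).some
    have hτ : ∀ a, (f (τ a), x (τ a)) = (f a, y a) := fun a =>
      Equiv.ofFiberEquiv_map (f := fun a => (f a, y a)) (g := fun a => (f a, x a)) _ a
    exact ⟨τ, funext fun a => congrArg Prod.fst (hτ a), funext fun a => congrArg Prod.snd (hτ a)⟩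
  · rintro ⟨τ, hτ, rfl⟩ i
    have hmap : (α i).map τ.toEmbedding = α i := by
      ext a
      have := congrFun hτ (τ.symm a)
      simp only [Function.comp_apply, Equiv.apply_symm_apply] at this
      simp [Finset.mem_map_equiv, hf, this]
    conv_rhs => rw [← hmap]
    simp [Finset.map_val, Multiset.map_map]

/-- Left translation by `τ` carries the stabilizer of `x ∘ τ` onto the set of block-preserving
permutations taking `x` to `x ∘ τ`. -/
theorem alphaMult_eq_card_transporter {Λ ι Y : Type*} (α : ι → Finset Λ) (f : Λ → ι)
    (hf : ∀ i a, a ∈ α i ↔ f a = i) (x : Λ → Y) (τ : Equiv.Perm Λ) (hτ : f ∘ τ = f) :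
    alphaMult α (x ∘ τ) = Nat.card {σ : Equiv.Perm Λ // f ∘ σ = f ∧ x ∘ σ = x ∘ τ} := by
  refine Nat.card_congr ((Equiv.mulLeft τ).subtypeEquiv fun σ => ?_)
  have hτ' : ∀ a, f (τ a) = f a := congrFun hτ
  simp only [hf, funext_iff, Function.comp_apply, Equiv.coe_mulLeft, Equiv.Perm.mul_apply, hτ']
  exact and_congr_left fun _ => ⟨fun h a => h _ a rfl, fun h i a ha => (h a).trans ha⟩

/-- (Multiplicity identity, equation (4.41).)  Let `α : ι → Finset Λ` be an ordered
partition of the finite type `Λ` (pairwise disjoint blocks covering `Λ`), and `x : Λ → Y`.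
Then the symmetrization fiber of `x` is finite and the sum over it of the
`α`-multiplicities equals `α! = ∏ i, |α i|!`. -/
theorem sum_alphaMult_eq_prod_factorial {Λ ι Y : Type*} [Fintype Λ] [Fintype ι]
    (α : ι → Finset Λ)
    (hdisj : ∀ i j : ι, i ≠ j → Disjoint (α i) (α j))
    (hcover : ∀ a : Λ, ∃ i, a ∈ α i)
    (x : Λ → Y) :
    (symFiber α x).Finite ∧
      ∑ᶠ y ∈ symFiber α x, alphaMult α y = ∏ i : ι, Nat.factorial (α i).card := by
  classical
  choose f hmem using hcover
  have hf : ∀ i a, a ∈ α i ↔ f a = i := by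
    refine fun i a => ⟨fun ha => ?_, fun h => h ▸ hmem a⟩
    by_contra hne
    exact Finset.disjoint_left.mp (hdisj _ _ hne) (hmem a) ha
  let G : Finset (Equiv.Perm Λ) := {σ | f ∘ σ = f}
  have hfiber : symFiber α x = ↑(G.image fun σ : Equiv.Perm Λ => x ∘ σ) := by
    ext y
    simp [mem_symFiber_iff α f hf, G]
  refine ⟨hfiber ▸ Finset.finite_toSet _, ?_⟩
  rw [hfiber, finsum_mem_coe_finset]
  calc ∑ y ∈ G.image (fun σ : Equiv.Perm Λ => x ∘ σ), alphaMult α y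
      = ∑ y ∈ G.image (fun σ : Equiv.Perm Λ => x ∘ σ),
          (G.filter fun σ : Equiv.Perm Λ => x ∘ σ = y).card := by
        refine Finset.sum_congr rfl fun y hy => ?_
        obtain ⟨τ, hτ, rfl⟩ := Finset.mem_image.mp hy
        rw [alphaMult_eq_card_transporter α f hf x τ (by simpa [G] using hτ)]
        exact Nat.subtype_card _ fun σ => by simp [G]
    _ = G.card := (Finset.card_eq_sum_card_image _ _).symm
    _ = Fintype.card {σ : Equiv.Perm Λ // f ∘ σ = f} := (Fintype.card_subtype _).symm
    _ = ∏ i : ι, Nat.factorial (α i).card := by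
        rw [DomMulAct.stabilizer_card]
        refine Finset.prod_congr rfl fun i _ => ?_
        rw [Fintype.card_of_subtype (α i) (hf i)]
end
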